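/- arXiv:2107.07815 — 8 statements merged into one kernel-verified Lean document; each statement's English description precedes it below -/
import Mathlib

section
/- Suppose the discount function satisfies f(i) = 1 for all 1 ≤ i ≤ k and f(i) = 0 for all i > k, and all edge weights are strictly positive. Then there exists an ordering d with val(d) = Σ_{e∈E} w(e) (the total edge weight) if and only if G has bandwidth at most k, i.e., there exists an ordering d such that |d(u)−d(v)| ≤ k for every edge {u,v} ∈ E. Moreover, val(d) ≤ Σ_{e∈E} w(e) for every ordering d. -/
/-- With the step discount function (`f i = 1` for `1 ≤ i ≤ k`, `f i = 0`
for `i > k`) and strictly positive edge weights, some ordering attains the total edge weight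
if and only if the graph has bandwidth at most `k`; moreover every ordering has value at most
the total edge weight. -/
theorem extTSP_total_weight_iff_bandwidth {V : Type} [Fintype V] [DecidableEq V]
    (G : SimpleGraph V) [DecidableRel G.Adj]
    (w : V → V → ℝ) (hw_symm : ∀ u v, w u v = w v u)
    (hw_pos : ∀ u v, G.Adj u v → 0 < w u v)
    (k : ℕ) (hk : 1 ≤ k)
    (f : ℕ → ℝ) (hf_one : ∀ i, 1 ≤ i → i ≤ k → f i = 1)
    (hf_zero : ∀ i, k < i → f i = 0) :
    ((∃ d : V ≃ Fin (Fintype.card V),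
        (1 / 2) * (∑ u : V, ∑ v : V,
            if G.Adj u v then f (Nat.dist (d u) (d v)) * w u v else 0)
          = (1 / 2) * (∑ u : V, ∑ v : V, if G.Adj u v then w u v else 0)) ↔
      (∃ d : V ≃ Fin (Fintype.card V),
        ∀ u v : V, G.Adj u v → Nat.dist (d u) (d v) ≤ k)) ∧
    (∀ d : V ≃ Fin (Fintype.card V),
      (1 / 2) * (∑ u : V, ∑ v : V,
          if G.Adj u v then f (Nat.dist (d u) (d v)) * w u v else 0)
        ≤ (1 / 2) * (∑ u : V, ∑ v : V, if G.Adj u v then w u v else 0)) := by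
  have dist_pos (d : V ≃ Fin (Fintype.card V)) {u v : V} (h : G.Adj u v) :
      1 ≤ Nat.dist (d u) (d v) :=
    Nat.dist_pos_of_ne fun e => h.ne (d.injective (Fin.ext e))
  have term_le (d : V ≃ Fin (Fintype.card V)) (u v : V) :
      (if G.Adj u v then f (Nat.dist (d u) (d v)) * w u v else 0)
        ≤ if G.Adj u v then w u v else 0 := by
    split_ifs with h
    · rcases le_or_gt (Nat.dist (d u) (d v)) k with hle | hlt
      · rw [hf_one _ (dist_pos d h) hle, one_mul]
      · rw [hf_zero _ hlt, zero_mul]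
        exact (hw_pos u v h).le
    · exact le_rfl
  have row_le (d : V ≃ Fin (Fintype.card V)) (u : V) :=
    Finset.sum_le_sum fun v (_ : v ∈ Finset.univ) => term_le d u v
  refine ⟨exists_congr fun d => ⟨fun heq u v h => ?_, fun hd => ?_⟩, fun d => ?_⟩
  · have rows_eq := (Finset.sum_eq_sum_iff_of_le fun u _ => row_le d u).1
      (mul_left_cancel₀ (by norm_num) heq) u (Finset.mem_univ u)
    have term_eq := (Finset.sum_eq_sum_iff_of_le fun v _ => term_le d u v).1
      rows_eq v (Finset.mem_univ v)
    by_contra! hlt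
    rw [if_pos h, if_pos h, hf_zero _ hlt, zero_mul] at term_eq
    exact (hw_pos u v h).ne term_eq
  · congr 1
    refine Finset.sum_congr rfl fun u _ => Finset.sum_congr rfl fun v _ => ?_
    split_ifs with h
    · rw [hf_one _ (dist_pos d h) (hd u v h), one_mul]
    · rfl
  · exact mul_le_mul_of_nonneg_left (Finset.sum_le_sum fun u _ => row_le d u) (by norm_num)
end

section
/- There exists an optimal ordering d (an ordering maximizing val) such that every connected component of the subgraph (V, O), where O is the set of edges realized by d, occupies a set of consecutive positions under d; i.e., for every such component C, the image d(C) is an interval of consecutive integers. -/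
open Classical in
/-- The Ext-TSP value of an ordering `d` of the vertices of `G`. -/
noncomputable def extVal {V : Type} [Fintype V] (G : SimpleGraph V)
    (w : V → V → ℝ) (f : ℕ → ℝ) (d : V ≃ Fin (Fintype.card V)) : ℝ :=
  (1 / 2) * ∑ u : V, ∑ v : V,
    if G.Adj u v then f (Nat.dist (d u) (d v)) * w u v else 0

/-- An injective map to a linear order yields an ordering of its finite domain. -/
theorem exists_equiv_fin_lt_iff {V α : Type*} [Fintype V] [LinearOrder α] (g : V → α)
    (hg : Function.Injective g) :
    ∃ d : V ≃ Fin (Fintype.card V), ∀ u v, d u < d v ↔ g u < g v := by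
  let : LinearOrder V := LinearOrder.lift' g hg
  let e : V ≃o Fin (Fintype.card V) := (Fintype.orderIsoFinOfCardEq V rfl).symm
  exact ⟨e.toEquiv, fun u v => e.lt_iff_lt⟩

/-- The distance between two positions counts the vertices placed after the first one,
up to the second one. -/
theorem card_filter_between {V : Type*} [Fintype V] {n : ℕ} (d : V ≃ Fin n) (u v : V) :
    (Finset.univ.filter fun x => d u < d x ∧ d x ≤ d v).card = (d v : ℕ) - d u := by
  rw [← Fin.card_Ioc, ← Finset.card_map d.toEmbedding]
  congr 1
  ext i
  simp only [Finset.mem_map_equiv, Finset.mem_filter, Finset.mem_univ, true_and,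
    Finset.mem_Ioc, Equiv.apply_symm_apply]

/-- Grouping the vertices by the classes of `c`, in the order of the labels, while keeping the
order inside each class, makes every class contiguous and brings its members no further apart. -/
theorem exists_grouped_ordering {V : Type*} [Fintype V] (d : V ≃ Fin (Fintype.card V))
    (c : V → ℕ) :
    ∃ e : V ≃ Fin (Fintype.card V),
      (∀ u v, c u = c v → Nat.dist (e u) (e v) ≤ Nat.dist (d u) (d v)) ∧
      ∀ u v x, c u = c v → e u ≤ e x → e x ≤ e v → c u = c x := by
  obtain ⟨e, he⟩ := exists_equiv_fin_lt_iff (fun x => toLex (c x, d x)) (by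
    intro x y hxy
    exact d.injective (congrArg Prod.snd (toLex.injective hxy)))
  have hlt : ∀ x y, e x < e y ↔ c x < c y ∨ c x = c y ∧ d x < d y := fun x y => by
    rw [he, Prod.Lex.toLex_lt_toLex]
  have hcontig : ∀ u v x, c u = c v → e u ≤ e x → e x ≤ e v → c u = c x := by
    intro u v x huv hux hxv
    rw [← not_lt, hlt] at hux hxv
    omega
  have hsub : ∀ u v, c u = c v → (e v : ℕ) - e u ≤ (d v : ℕ) - d u := by
    intro u v huv
    rw [← card_filter_between, ← card_filter_between]
    refine Finset.card_le_card fun x hx => ?_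
    simp only [Finset.mem_filter, Finset.mem_univ, true_and] at hx ⊢
    obtain ⟨hux, hxv⟩ := hx
    have hc := hcontig u v x huv hux.le hxv
    rw [hlt] at hux
    rw [← not_lt, hlt] at hxv
    omega
  refine ⟨e, fun u v huv => ?_, hcontig⟩
  exact Nat.add_le_add (hsub v u huv.symm) (hsub u v huv)

/-- If every realized edge gets no longer, then the value does not decrease. -/
theorem extVal_le_extVal {V : Type} [Fintype V] (G : SimpleGraph V) (w : V → V → ℝ)
    (hw_pos : ∀ u v, G.Adj u v → 0 < w u v) (k : ℕ) (f : ℕ → ℝ) (hf_nonneg : ∀ i, 0 ≤ f i)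
    (hf_mono : Antitone f) (hf_zero : ∀ i, k < i → f i = 0) (d e : V ≃ Fin (Fintype.card V))
    (h : ∀ u v, G.Adj u v → Nat.dist (d u) (d v) ≤ k →
      Nat.dist (e u) (e v) ≤ Nat.dist (d u) (d v)) :
    extVal G w f d ≤ extVal G w f e := by
  unfold extVal
  refine mul_le_mul_of_nonneg_left ?_ (by norm_num)
  refine Finset.sum_le_sum fun u _ => Finset.sum_le_sum fun v _ => ?_
  split_ifs with huv
  · refine mul_le_mul_of_nonneg_right ?_ (hw_pos u v huv).le
    rcases le_or_gt (Nat.dist (d u) (d v)) k with hk | hk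
    · exact hf_mono (h u v huv hk)
    · rw [hf_zero _ hk]
      exact hf_nonneg _
  · exact le_rfl

/-- There is an optimal ordering `d` such that every connected component of
the subgraph of edges realized by `d` (edges whose endpoints are at distance at most `k`)
occupies a set of consecutive positions: if `u` and `v` lie in a common component, then so
does every vertex `x` whose position lies between those of `u` and `v`. -/
theorem extTSP_exists_optimal_with_contiguous_components {V : Type} [Fintype V] [DecidableEq V]
    (G : SimpleGraph V) [DecidableRel G.Adj]
    (w : V → V → ℝ) (hw_symm : ∀ u v, w u v = w v u)
    (hw_pos : ∀ u v, G.Adj u v → 0 < w u v)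
    (k : ℕ) (hk : 1 ≤ k)
    (f : ℕ → ℝ) (hf_nonneg : ∀ i, 0 ≤ f i) (hf_mono : Antitone f)
    (hf_one : f 1 = 1) (hf_zero : ∀ i, k < i → f i = 0) :
    ∃ d : V ≃ Fin (Fintype.card V),
      (∀ d' : V ≃ Fin (Fintype.card V), extVal G w f d' ≤ extVal G w f d) ∧
      (∀ u v x : V,
        (SimpleGraph.fromRel
            (fun a b => G.Adj a b ∧ Nat.dist (d a) (d b) ≤ k)).Reachable u v →
        d u ≤ d x → d x ≤ d v →
        (SimpleGraph.fromRel
            (fun a b => G.Adj a b ∧ Nat.dist (d a) (d b) ≤ k)).Reachable u x) := by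
  classical
  have : Nonempty (V ≃ Fin (Fintype.card V)) := ⟨Fintype.equivFin V⟩
  let R : (V ≃ Fin (Fintype.card V)) → V → V → Prop :=
    fun d a b => G.Adj a b ∧ Nat.dist (d a) (d b) ≤ k
  let realized : (V ≃ Fin (Fintype.card V)) → Finset (V × V) :=
    fun d => Finset.univ.filter fun p => R d p.1 p.2
  -- Among the optimal orderings, take one with the most realized edges.
  obtain ⟨d, hd⟩ := Finite.exists_max
    fun d => toLex (extVal G w f d, (realized d).card)
  simp only [Prod.Lex.toLex_le_toLex] at hd
  let H := SimpleGraph.fromRel (R d)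
  let c : V → ℕ := fun x => d (H.connectedComponentMk x).out
  have hc : ∀ u v, c u = c v ↔ H.Reachable u v := by
    intro u v
    rw [← SimpleGraph.ConnectedComponent.eq]
    refine ⟨fun h => ?_, fun h => by simp only [c, h]⟩
    exact (Function.LeftInverse.injective Quot.out_eq) (d.injective (Fin.val_injective h))
  obtain ⟨e, hdist, hcontig⟩ := exists_grouped_ordering d c
  have hshort : ∀ u v, G.Adj u v → Nat.dist (d u) (d v) ≤ k →
      Nat.dist (e u) (e v) ≤ Nat.dist (d u) (d v) := fun u v huv hk =>
    hdist u v ((hc u v).2 (SimpleGraph.Adj.reachable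
      ((SimpleGraph.fromRel_adj _ _ _).2 ⟨huv.ne, Or.inl ⟨huv, hk⟩⟩)))
  have hval := extVal_le_extVal G w hw_pos k f hf_nonneg hf_mono hf_zero d e hshort
  have hsub : realized d ⊆ realized e := by
    intro p hp
    simp only [realized, R, Finset.mem_filter, Finset.mem_univ, true_and] at hp ⊢
    exact ⟨hp.1, (hshort _ _ hp.1 hp.2).trans hp.2⟩
  have heq : realized d = realized e := by
    refine Finset.eq_of_subset_of_card_le hsub ?_
    rcases hd e with h | h
    · exact absurd h hval.not_gt
    · exact h.2
  have hR : R e = R d := by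
    funext a b
    have := Finset.ext_iff.1 heq (a, b)
    simp only [realized, Finset.mem_filter, Finset.mem_univ, true_and] at this
    exact propext this.symm
  refine ⟨e, fun d' => ?_, fun u v x huv hux hxv => ?_⟩
  · refine le_trans ?_ hval
    rcases hd d' with h | h
    · exact h.le
    · exact h.1.le
  · change (SimpleGraph.fromRel (R e)).Reachable u v at huv
    change (SimpleGraph.fromRel (R e)).Reachable u x
    rw [hR] at huv ⊢
    exact (hc u x).1 (hcontig u v x ((hc u v).2 huv) hux hxv)
end

section
/- Let h ≥ 1 be an integer. For every ordering d of V there exists a partition of the position set {1,…,n} into consecutive intervals, each of length at most h·k, such that Σ f(|d(u)−d(v)|)·w(u,v), taken over edges {u,v} whose two endpoints' positions lie in the same interval of the partition, is at least (1 − 1/h)·val(d). Consequently, the optimal value of the clustered problem (partition V into clusters of size at most hk and order each cluster separately, summing the Ext-TSP objective over clusters) is at least ((h−1)/h)·OPT. -/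
/-- Two consecutive naturals are separated by at most one of the `h` shifted divisions by `h`. -/
theorem card_shift_div_ne_le_one {h a b : ℕ} (hab : a ≤ b) (hba : b ≤ a + 1) :
    ((Finset.range h).filter (fun s => (a + s) / h ≠ (b + s) / h)).card ≤ 1 := by
  have dvd_of_ne : ∀ s, (a + s) / h ≠ (b + s) / h → h ∣ a + s + 1 := by
    intro s hs
    obtain rfl | rfl : b = a ∨ b = a + 1 := by omega
    · exact absurd rfl hs
    · by_contra hdvd
      apply hs
      rw [show a + 1 + s = a + s + 1 by ring, Nat.succ_div, if_neg hdvd, add_zero]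
  rw [Finset.card_le_one]
  intro s hs t ht
  rw [Finset.mem_filter, Finset.mem_range] at hs ht
  have hst : a + 1 + s ≡ a + 1 + t [MOD h] := by
    rw [show a + 1 + s = a + s + 1 by ring, show a + 1 + t = a + t + 1 by ring]
    exact ((Nat.modEq_zero_iff_dvd.2 (dvd_of_ne s hs.2)).trans
      (Nat.modEq_zero_iff_dvd.2 (dvd_of_ne t ht.2)).symm)
  exact (Nat.ModEq.add_left_cancel' _ hst).eq_of_lt_of_lt hs.1 ht.1

/-- Positions at distance at most `k` lie in a common block for all but at most one of the `h`
shifts of the partition into blocks of length `h * k`. -/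
theorem pred_le_card_shift_same_block {h k a b : ℕ} (hk : 1 ≤ k) (hab : Nat.dist a b ≤ k) :
    h - 1 ≤ ((Finset.range h).filter
      (fun s => (a / k + s) / h = (b / k + s) / h)).card := by
  have separated : ((Finset.range h).filter
      (fun s => ¬ (a / k + s) / h = (b / k + s) / h)).card ≤ 1 := by
    rw [Nat.dist] at hab
    rcases le_total a b with hle | hle
    · refine card_shift_div_ne_le_one (Nat.div_le_div_right hle) ?_
      rw [← Nat.add_div_right _ hk]
      exact Nat.div_le_div_right (by omega)
    · simp_rw [eq_comm (a := (a / k + _) / h)]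
      refine card_shift_div_ne_le_one (Nat.div_le_div_right hle) ?_
      rw [← Nat.add_div_right _ hk]
      exact Nat.div_le_div_right (by omega)
  have total := Finset.card_filter_add_card_filter_not (s := Finset.range h)
    (fun s => (a / k + s) / h = (b / k + s) / h)
  rw [Finset.card_range] at total
  omega

/-- The blocks of a shifted partition have at most `h * k` positions. -/
theorem card_shift_block_le {n h k : ℕ} (hk : 1 ≤ k) (hh : 1 ≤ h) (s j : ℕ) :
    (Finset.univ.filter (fun p : Fin n => ((p : ℕ) / k + s) / h = j)).card ≤ h * k := by
  have key : (Finset.univ.filter (fun p : Fin n => ((p : ℕ) / k + s) / h = j)).card ≤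
      (Finset.Ico (j * (k * h)) ((j + 1) * (k * h))).card := by
    refine Finset.card_le_card_of_injOn (fun p => (p : ℕ) + s * k) ?_ ?_
    · intro p hp
      have hp' : ((p : ℕ) / k + s) / h = j := by simpa using hp
      rw [← Nat.add_mul_div_right _ _ hk, Nat.div_div_eq_div_mul,
        Nat.div_eq_iff (by positivity)] at hp'
      have hpos : 0 < k * h := by positivity
      rw [Finset.mem_coe, Finset.mem_Ico, add_one_mul]
      dsimp only
      omega
    · intro p _ q _ hpq
      exact Fin.ext (Nat.add_right_cancel hpq)
  refine key.trans (le_of_eq ?_)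
  rw [Nat.card_Ico, add_one_mul, Nat.add_sub_cancel_left, mul_comm]

/-- Some shift of the partition into blocks of length `h * k` keeps at least a `1 - 1 / h`
fraction of the value of an ordering. -/
theorem exists_shift_value_ge {V : Type} [Fintype V] (G : SimpleGraph V) [DecidableRel G.Adj]
    (w : V → V → ℝ) (hw : ∀ u v, G.Adj u v → 0 ≤ w u v)
    (k : ℕ) (hk : 1 ≤ k) (f : ℕ → ℝ) (hf_nonneg : ∀ i, 0 ≤ f i)
    (hf_zero : ∀ i, k < i → f i = 0) (h : ℕ) (hh : 1 ≤ h) (d : V ≃ Fin (Fintype.card V)) :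
    ∃ s : ℕ, (1 / 2) * (∑ u : V, ∑ v : V,
        if G.Adj u v ∧ ((d u : ℕ) / k + s) / h = ((d v : ℕ) / k + s) / h
          then f (Nat.dist (d u) (d v)) * w u v else 0)
      ≥ (1 - 1 / (h : ℝ)) * extVal G w f d := by
  have hpos : (0 : ℝ) < h := by exact_mod_cast hh
  have edge : ∀ u v : V,
      ((h : ℝ) - 1) * (if G.Adj u v then f (Nat.dist (d u) (d v)) * w u v else 0) ≤
      ∑ s ∈ Finset.range h,
        if G.Adj u v ∧ ((d u : ℕ) / k + s) / h = ((d v : ℕ) / k + s) / h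
          then f (Nat.dist (d u) (d v)) * w u v else 0 := by
    intro u v
    by_cases hadj : G.Adj u v
    · simp only [hadj, true_and, if_true]
      rw [← Finset.sum_filter, Finset.sum_const, nsmul_eq_mul]
      rcases le_or_gt (Nat.dist (d u) (d v)) k with hle | hlt
      · refine mul_le_mul_of_nonneg_right ?_ (mul_nonneg (hf_nonneg _) (hw u v hadj))
        have count := pred_le_card_shift_same_block (h := h) hk hle
        rw [sub_le_iff_le_add]
        exact_mod_cast Nat.sub_le_iff_le_add.1 count
      · simp [hf_zero _ hlt]
    · simp [hadj]
  have average : ∑ _s ∈ Finset.range h, (1 - 1 / (h : ℝ)) * extVal G w f d ≤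
      ∑ s ∈ Finset.range h, (1 / 2) * (∑ u : V, ∑ v : V,
        if G.Adj u v ∧ ((d u : ℕ) / k + s) / h = ((d v : ℕ) / k + s) / h
          then f (Nat.dist (d u) (d v)) * w u v else 0) := by
    calc ∑ _s ∈ Finset.range h, (1 - 1 / (h : ℝ)) * extVal G w f d
        = ((h : ℝ) - 1) * extVal G w f d := by
          rw [Finset.sum_const, Finset.card_range, nsmul_eq_mul]
          field_simp
      _ = (1 / 2) * ∑ u : V, ∑ v : V,
            ((h : ℝ) - 1) * (if G.Adj u v then f (Nat.dist (d u) (d v)) * w u v else 0) := by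
          simp only [extVal, ← Finset.mul_sum]
          rw [mul_left_comm]
          congr!
      _ ≤ (1 / 2) * ∑ u : V, ∑ v : V, ∑ s ∈ Finset.range h,
            if G.Adj u v ∧ ((d u : ℕ) / k + s) / h = ((d v : ℕ) / k + s) / h
              then f (Nat.dist (d u) (d v)) * w u v else 0 := by
          refine mul_le_mul_of_nonneg_left ?_ (by norm_num)
          exact Finset.sum_le_sum fun u _ => Finset.sum_le_sum fun v _ => edge u v
      _ = _ := by
          rw [← Finset.mul_sum, Finset.sum_comm (s := Finset.range h)]
          simp_rw [Finset.sum_comm (s := Finset.range h)]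
  obtain ⟨s, _, hs⟩ := Finset.exists_le_of_sum_le (Finset.nonempty_range_iff.2 (by omega)) average
  exact ⟨s, hs⟩

/-- For every ordering `d` there is a partition of the positions into
consecutive intervals (encoded by a monotone cluster map `c`), each of size at most `h·k`,
such that the Ext-TSP value restricted to edges whose endpoints lie in a common interval is
at least `(1 - 1/h)` times the value of `d`.  Consequently the optimal value of the clustered
problem is at least `((h-1)/h)·OPT`. -/
theorem extTSP_clustering {V : Type} [Fintype V] [DecidableEq V]
    (G : SimpleGraph V) [DecidableRel G.Adj]
    (w : V → V → ℝ) (hw_symm : ∀ u v, w u v = w v u)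
    (hw_pos : ∀ u v, G.Adj u v → 0 < w u v)
    (k : ℕ) (hk : 1 ≤ k)
    (f : ℕ → ℝ) (hf_nonneg : ∀ i, 0 ≤ f i) (hf_mono : Antitone f)
    (hf_one : f 1 = 1) (hf_zero : ∀ i, k < i → f i = 0)
    (h : ℕ) (hh : 1 ≤ h) :
    (∀ d : V ≃ Fin (Fintype.card V),
      ∃ c : Fin (Fintype.card V) → ℕ, Monotone c ∧
        (∀ j : ℕ, (Finset.univ.filter (fun p : Fin (Fintype.card V) => c p = j)).card ≤ h * k) ∧
        (1 / 2) * (∑ u : V, ∑ v : V,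
            if G.Adj u v ∧ c (d u) = c (d v) then f (Nat.dist (d u) (d v)) * w u v else 0)
          ≥ (1 - 1 / (h : ℝ)) * extVal G w f d) ∧
    (∃ (d : V ≃ Fin (Fintype.card V)) (c : Fin (Fintype.card V) → ℕ), Monotone c ∧
      (∀ j : ℕ, (Finset.univ.filter (fun p : Fin (Fintype.card V) => c p = j)).card ≤ h * k) ∧
      (1 / 2) * (∑ u : V, ∑ v : V,
          if G.Adj u v ∧ c (d u) = c (d v) then f (Nat.dist (d u) (d v)) * w u v else 0)
        ≥ (((h : ℝ) - 1) / (h : ℝ)) *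
            ⨆ d' : V ≃ Fin (Fintype.card V), extVal G w f d') := by
  have clustering : ∀ d : V ≃ Fin (Fintype.card V),
      ∃ c : Fin (Fintype.card V) → ℕ, Monotone c ∧
        (∀ j : ℕ, (Finset.univ.filter (fun p : Fin (Fintype.card V) => c p = j)).card ≤ h * k) ∧
        (1 / 2) * (∑ u : V, ∑ v : V,
            if G.Adj u v ∧ c (d u) = c (d v) then f (Nat.dist (d u) (d v)) * w u v else 0)
          ≥ (1 - 1 / (h : ℝ)) * extVal G w f d := by
    intro d
    obtain ⟨s, hs⟩ := exists_shift_value_ge G w (fun u v huv => (hw_pos u v huv).le) k hk f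
      hf_nonneg hf_zero h hh d
    refine ⟨fun p => ((p : ℕ) / k + s) / h, ?_, card_shift_block_le hk hh s, hs⟩
    intro p q hpq
    exact Nat.div_le_div_right (Nat.add_le_add_right (Nat.div_le_div_right hpq) s)
  refine ⟨clustering, ?_⟩
  have : Nonempty (V ≃ Fin (Fintype.card V)) := ⟨Fintype.equivFin V⟩
  obtain ⟨d, hd⟩ := exists_eq_ciSup_of_finite (f := fun d' => extVal G w f d')
  obtain ⟨c, hmono, hcard, hval⟩ := clustering d
  refine ⟨d, c, hmono, hcard, ?_⟩
  rw [← hd, sub_div, div_self (by positivity)]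
  exact hval
end

section
/- Extend w to all unordered pairs by setting w(u,v) = 0 when {u,v} ∉ E. Let u_1, u_2, …, u_n be an enumeration of V satisfying the greedy property: for every i < n and every v ∈ {u_{i+1}, …, u_n}, w(u_i, u_{i+1}) ≥ w(u_i, v). Let d be the ordering with d(u_i) = i. Then val(d) ≥ Σ_{i=1}^{n−1} w(u_i, u_{i+1}) and OPT ≤ 2k · Σ_{i=1}^{n−1} w(u_i, u_{i+1}); hence val(d) ≥ OPT/(2k), i.e., the greedy algorithm is a 2k-approximation. -/
/-- The total weight of consecutive pairs in the ordering `d`,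
`∑_{i=1}^{n-1} w(u_i, u_{i+1})` where `u_i = d.symm i`. -/
noncomputable def greedySum {V : Type} [Fintype V] (w : V → V → ℝ)
    (d : V ≃ Fin (Fintype.card V)) : ℝ :=
  ∑ i : Fin (Fintype.card V),
    if hi : (i : ℕ) + 1 < Fintype.card V then
      w (d.symm i) (d.symm ⟨(i : ℕ) + 1, hi⟩) else 0

/-- The weight of the edge from `u` to its successor in the ordering `d`, and `0` for the last
vertex. -/
noncomputable def succWeight {V : Type} [Fintype V] (w : V → V → ℝ)
    (d : V ≃ Fin (Fintype.card V)) (u : V) : ℝ :=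
  if hi : (d u : ℕ) + 1 < Fintype.card V then w u (d.symm ⟨(d u : ℕ) + 1, hi⟩) else 0

lemma greedySum_eq_sum_succWeight {V : Type} [Fintype V] (w : V → V → ℝ)
    (d : V ≃ Fin (Fintype.card V)) : greedySum w d = ∑ u, succWeight w d u := by
  rw [← Equiv.sum_comp d.symm]
  simp [greedySum, succWeight]

lemma succWeight_nonneg {V : Type} [Fintype V] {w : V → V → ℝ} (hw : ∀ u v, 0 ≤ w u v)
    (d : V ≃ Fin (Fintype.card V)) (u : V) : 0 ≤ succWeight w d u := by
  unfold succWeight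
  split_ifs
  exacts [hw _ _, le_rfl]

lemma succWeight_eq_sum {V : Type} [Fintype V] (w : V → V → ℝ)
    (d : V ≃ Fin (Fintype.card V)) (u : V) :
    succWeight w d u = ∑ v, if (d v : ℕ) = d u + 1 then w u v else 0 := by
  unfold succWeight
  split_ifs with hi
  · rw [Finset.sum_eq_single (d.symm ⟨(d u : ℕ) + 1, hi⟩)]
    · simp
    · intro v _ hv
      refine if_neg fun h => hv ?_
      rw [Equiv.eq_symm_apply]
      exact Fin.ext h
    · simp
  · refine (Finset.sum_eq_zero fun v _ => if_neg ?_).symm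
    have := (d v).isLt
    omega

lemma card_filter_dist_le {V : Type} [Fintype V] {n : ℕ} (d : V ≃ Fin n) (k : ℕ) (u : V) :
    (Finset.univ.filter fun v => d v ≠ d u ∧ Nat.dist (d u) (d v) ≤ k).card ≤ 2 * k := by
  have hcard : ((Finset.Icc ((d u : ℕ) - k) (d u + k)).erase (d u)).card ≤ 2 * k := by
    rw [Finset.card_erase_of_mem (by simp), Nat.card_Icc]
    omega
  refine le_trans (Finset.card_le_card_of_injOn (fun v => (d v : ℕ)) ?_ ?_) hcard
  · intro v hv
    rw [Finset.mem_coe, Finset.mem_filter_univ, Nat.dist] at hv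
    have hne : (d v : ℕ) ≠ d u := fun h => hv.1 (Fin.ext h)
    simp only [Finset.mem_coe, Finset.mem_erase, Finset.mem_Icc]
    omega
  · intro a _ b _ h
    exact d.injective (Fin.ext h)

lemma greedySum_le_extVal {V : Type} [Fintype V] {G : SimpleGraph V} {w : V → V → ℝ}
    (hw_symm : ∀ u v, w u v = w v u) (hw_nonneg : ∀ u v, 0 ≤ w u v)
    (hw_zero : ∀ u v, ¬ G.Adj u v → w u v = 0)
    {f : ℕ → ℝ} (hf_nonneg : ∀ i, 0 ≤ f i) (hf_one : f 1 = 1)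
    (d : V ≃ Fin (Fintype.card V)) : greedySum w d ≤ extVal G w f d := by
  have hsum : greedySum w d
      = ∑ u, ∑ v, if (d v : ℕ) = d u + 1 then w u v else 0 := by
    simp_rw [greedySum_eq_sum_succWeight, succWeight_eq_sum]
  have htwo : greedySum w d + greedySum w d = ∑ u, ∑ v,
      ((if (d v : ℕ) = d u + 1 then w u v else 0)
        + if (d u : ℕ) = d v + 1 then w v u else 0) := by
    simp_rw [Finset.sum_add_distrib]
    rw [hsum]
    congr 1
    exact Finset.sum_comm
  have hle : greedySum w d + greedySum w d ≤ 2 * extVal G w f d := by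
    rw [htwo, extVal, ← mul_assoc, mul_one_div_cancel two_ne_zero, one_mul]
    refine Finset.sum_le_sum fun u _ => Finset.sum_le_sum fun v _ => ?_
    by_cases hadj : G.Adj u v
    · rw [if_pos hadj]
      split_ifs with h1 h2 h2
      · omega
      · have : Nat.dist (d u) (d v) = 1 := by simp only [Nat.dist]; omega
        simp [this, hf_one]
      · have : Nat.dist (d u) (d v) = 1 := by simp only [Nat.dist]; omega
        simp [this, hf_one, hw_symm v u]
      · simpa using mul_nonneg (hf_nonneg _) (hw_nonneg u v)
    · simp [hadj, hw_zero u v hadj, hw_symm v u]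
  linarith

lemma extVal_le_two_mul_greedySum {V : Type} [Fintype V] {G : SimpleGraph V} {w : V → V → ℝ}
    (hw_symm : ∀ u v, w u v = w v u) (hw_nonneg : ∀ u v, 0 ≤ w u v)
    {k : ℕ} {f : ℕ → ℝ} (hf_mono : Antitone f)
    (hf_one : f 1 = 1) (hf_zero : ∀ i, k < i → f i = 0)
    (d : V ≃ Fin (Fintype.card V))
    (hgreedy : ∀ (i j : Fin (Fintype.card V)) (hi : (i : ℕ) + 1 < Fintype.card V),
      (i : ℕ) < (j : ℕ) →
      w (d.symm i) (d.symm j) ≤ w (d.symm i) (d.symm ⟨(i : ℕ) + 1, hi⟩))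
    (d' : V ≃ Fin (Fintype.card V)) :
    extVal G w f d' ≤ 2 * (k : ℝ) * greedySum w d := by
  have hlt : ∀ u v, d u < d v → w u v ≤ succWeight w d u := by
    intro u v huv
    have hi : (d u : ℕ) + 1 < Fintype.card V := by
      have := (d v).isLt
      have : (d u : ℕ) < d v := huv
      omega
    simpa [succWeight, hi] using hgreedy (d u) (d v) hi huv
  have hedge : ∀ u v, u ≠ v → w u v ≤ succWeight w d u + succWeight w d v := by
    intro u v huv
    have hu := succWeight_nonneg hw_nonneg d u
    have hv := succWeight_nonneg hw_nonneg d v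
    rcases lt_or_gt_of_ne (d.injective.ne huv) with h | h
    · linarith [hlt u v h]
    · linarith [hlt v u h, hw_symm u v]
  let near : V → V → Prop := fun u v => d' v ≠ d' u ∧ Nat.dist (d' u) (d' v) ≤ k
  have hnear : ∀ u v, near u v ↔ near v u := fun u v => by
    simp only [near, Nat.dist_comm, ne_comm]
  have hsum : ∑ u, ∑ v, (if near u v then succWeight w d u else 0)
      ≤ 2 * (k : ℝ) * greedySum w d := by
    rw [greedySum_eq_sum_succWeight, Finset.mul_sum]
    refine Finset.sum_le_sum fun u _ => ?_
    rw [← Finset.sum_filter, Finset.sum_const, nsmul_eq_mul]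
    refine mul_le_mul_of_nonneg_right ?_ (succWeight_nonneg hw_nonneg d u)
    exact_mod_cast card_filter_dist_le d' k u
  have hswap : ∑ u, ∑ v, (if near u v then succWeight w d v else 0)
      = ∑ u, ∑ v, (if near u v then succWeight w d u else 0) := by
    rw [Finset.sum_comm]
    simp_rw [hnear]
  have hle : 2 * extVal G w f d' ≤ ∑ u, ∑ v,
      ((if near u v then succWeight w d u else 0)
        + if near u v then succWeight w d v else 0) := by
    rw [extVal, ← mul_assoc, mul_one_div_cancel two_ne_zero, one_mul]
    refine Finset.sum_le_sum fun u _ => Finset.sum_le_sum fun v _ => ?_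
    have hu := succWeight_nonneg hw_nonneg d u
    have hv := succWeight_nonneg hw_nonneg d v
    by_cases hadj : G.Adj u v
    · rw [if_pos hadj]
      have hne : d' v ≠ d' u := d'.injective.ne hadj.ne'
      by_cases hk : Nat.dist (d' u) (d' v) ≤ k
      · rw [if_pos ⟨hne, hk⟩, if_pos ⟨hne, hk⟩]
        have hf : f (Nat.dist (d' u) (d' v)) ≤ 1 :=
          hf_one ▸ hf_mono (Nat.dist_pos_of_ne fun h => hne (Fin.ext h.symm))
        exact (mul_le_of_le_one_left (hw_nonneg u v) hf).trans (hedge u v hadj.ne)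
      · rw [hf_zero _ (not_le.mp hk), zero_mul]
        split_ifs <;> linarith
    · rw [if_neg hadj]
      split_ifs <;> linarith
  simp_rw [Finset.sum_add_distrib] at hle
  linarith

/-- If the enumeration `u_1, …, u_n` given by `d` satisfies the greedy
property (each `u_{i+1}` is a heaviest available partner of `u_i`, with `w = 0` on
non-edges), then `val(d) ≥ ∑ w(u_i,u_{i+1})`, `OPT ≤ 2k·∑ w(u_i,u_{i+1})`, and hence
`val(d) ≥ OPT/(2k)`: greedy is a `2k`-approximation. -/
theorem extTSP_greedy_two_k_approx {V : Type} [Fintype V] [DecidableEq V]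
    (G : SimpleGraph V) [DecidableRel G.Adj]
    (w : V → V → ℝ) (hw_symm : ∀ u v, w u v = w v u)
    (hw_pos : ∀ u v, G.Adj u v → 0 < w u v)
    (hw_zero : ∀ u v, ¬ G.Adj u v → w u v = 0)
    (k : ℕ) (hk : 1 ≤ k)
    (f : ℕ → ℝ) (hf_nonneg : ∀ i, 0 ≤ f i) (hf_mono : Antitone f)
    (hf_one : f 1 = 1) (hf_zero : ∀ i, k < i → f i = 0)
    (d : V ≃ Fin (Fintype.card V))
    (hgreedy : ∀ (i j : Fin (Fintype.card V)) (hi : (i : ℕ) + 1 < Fintype.card V),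
      (i : ℕ) < (j : ℕ) →
      w (d.symm i) (d.symm j) ≤ w (d.symm i) (d.symm ⟨(i : ℕ) + 1, hi⟩)) :
    extVal G w f d ≥ greedySum w d ∧
    (⨆ d' : V ≃ Fin (Fintype.card V), extVal G w f d')
      ≤ 2 * (k : ℝ) * greedySum w d ∧
    extVal G w f d ≥ (⨆ d' : V ≃ Fin (Fintype.card V), extVal G w f d') / (2 * (k : ℝ)) := by
  have hw_nonneg : ∀ u v, 0 ≤ w u v := fun u v => by
    by_cases h : G.Adj u v
    exacts [(hw_pos u v h).le, (hw_zero u v h).ge]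
  have hlower := greedySum_le_extVal hw_symm hw_nonneg hw_zero hf_nonneg hf_one d
  have : Nonempty (V ≃ Fin (Fintype.card V)) := ⟨d⟩
  have hupper : (⨆ d' : V ≃ Fin (Fintype.card V), extVal G w f d')
      ≤ 2 * (k : ℝ) * greedySum w d :=
    ciSup_le (extVal_le_two_mul_greedySum hw_symm hw_nonneg hf_mono hf_one hf_zero d hgreedy)
  refine ⟨hlower, hupper, ?_⟩
  have hk_pos : (0 : ℝ) < 2 * k := by positivity
  exact le_trans ((div_le_iff₀' hk_pos).mpr hupper) hlower
end

section
/- The factor 2k for greedy is tight: for every k ≥ 1 and every ε > 0 there exist an Ext-TSP instance (namely, for suitable ℓ, the graph consisting of ℓ 'center' vertices joined in a path, each center having 2k pendant leaves, all edge weights equal to 1, with discount f(i) = 1 for i ≤ k and f(i) = 0 for i > k) and an enumeration u_1, …, u_n of its vertices satisfying the greedy property (for every i < n and every v ∈ {u_{i+1},…,u_n}, w(u_i,u_{i+1}) ≥ w(u_i,v), with w = 0 on non-edges) such that the resulting ordering d has val(d) = ℓ − 1 + k while OPT ≥ 2kℓ; in particular OPT > (2k − ε)·val(d). -/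
open Classical in
/-- Unit weights on the edges of `G` (and `0` on non-edges). -/
noncomputable def unitW {V : Type} (G : SimpleGraph V) : V → V → ℝ :=
  fun u v => if G.Adj u v then 1 else 0

/-- The step discount function: `f i = 1` for `i ≤ k` and `f i = 0` for `i > k`. -/
def stepF (k : ℕ) : ℕ → ℝ := fun i => if i ≤ k then 1 else 0

/-- The vertex set of the tight instance for greedy: `ℓ` centers (joined in a path) with
`2k` pendant leaves each. -/
abbrev StarPathV (k ℓ : ℕ) : Type := Fin ℓ ⊕ Fin ℓ × Fin (2 * k)

/-- The tight instance for greedy: centers `Sum.inl i` and `Sum.inl (i+1)` are joined by a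
path edge, and each leaf `Sum.inr (i, t)` is joined to its center `Sum.inl i`. -/
def starPathGraph (k ℓ : ℕ) : SimpleGraph (StarPathV k ℓ) :=
  SimpleGraph.fromRel (fun a b =>
    (∃ i j : Fin ℓ, a = Sum.inl i ∧ b = Sum.inl j ∧ (j : ℕ) = (i : ℕ) + 1) ∨
    (∃ (i : Fin ℓ) (p : Fin ℓ × Fin (2 * k)), a = Sum.inl i ∧ b = Sum.inr p ∧ p.1 = i))

/-- An injective numbering of a finite type by numbers below its cardinality is an ordering. -/
theorem exists_ordering_of_injective {V : Type} [Fintype V] (g : V → ℕ)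
    (hg : Function.Injective g) (hlt : ∀ v, g v < Fintype.card V) :
    ∃ d : V ≃ Fin (Fintype.card V), ∀ v, (d v : ℕ) = g v := by
  have hinj : Function.Injective fun v => (⟨g v, hlt v⟩ : Fin (Fintype.card V)) :=
    fun a b h => hg (congrArg Fin.val h)
  exact ⟨Equiv.ofBijective _
    ((Fintype.bijective_iff_injective_and_card _).2 ⟨hinj, by simp⟩), fun v => rfl⟩

theorem mul_add_inj_of_lt {n a b s t : ℕ} (hs : s < n) (ht : t < n)
    (h : a * n + s = b * n + t) : a = b ∧ s = t := by
  have hab : a = b := by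
    rcases lt_trichotomy a b with hlt | heq | hlt
    · nlinarith [Nat.mul_le_mul_right n (Nat.succ_le_of_lt hlt)]
    · exact heq
    · nlinarith [Nat.mul_le_mul_right n (Nat.succ_le_of_lt hlt)]
  subst hab
  exact ⟨rfl, by omega⟩

section StarPath

variable {k ℓ : ℕ}

theorem starPathGraph_adj_inl_inl (i j : Fin ℓ) :
    (starPathGraph k ℓ).Adj (Sum.inl i) (Sum.inl j) ↔
      (j : ℕ) = (i : ℕ) + 1 ∨ (i : ℕ) = (j : ℕ) + 1 := by
  simp only [starPathGraph, SimpleGraph.fromRel_adj]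
  constructor
  · rintro ⟨-, (⟨a, b, ha, hb, h⟩ | ⟨_, _, _, h, _⟩) | (⟨a, b, ha, hb, h⟩ | ⟨_, _, _, h, _⟩)⟩
    · cases ha; cases hb; exact Or.inl h
    · cases h
    · cases ha; cases hb; exact Or.inr h
    · cases h
  · intro h
    refine ⟨fun hij => ?_, h.imp (fun h => Or.inl ⟨i, j, rfl, rfl, h⟩)
      (fun h => Or.inl ⟨j, i, rfl, rfl, h⟩)⟩
    cases hij
    omega

theorem starPathGraph_adj_inl_inr (i : Fin ℓ) (p : Fin ℓ × Fin (2 * k)) :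
    (starPathGraph k ℓ).Adj (Sum.inl i) (Sum.inr p) ↔ p.1 = i := by
  obtain ⟨j, t⟩ := p
  simp [starPathGraph, SimpleGraph.fromRel_adj]

theorem starPathGraph_adj_inr_inl (i : Fin ℓ) (p : Fin ℓ × Fin (2 * k)) :
    (starPathGraph k ℓ).Adj (Sum.inr p) (Sum.inl i) ↔ p.1 = i := by
  rw [SimpleGraph.adj_comm, starPathGraph_adj_inl_inr]

theorem not_starPathGraph_adj_inr_inr (p q : Fin ℓ × Fin (2 * k)) :
    ¬ (starPathGraph k ℓ).Adj (Sum.inr p) (Sum.inr q) := by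
  simp [starPathGraph, SimpleGraph.fromRel_adj]

/-- The value of an ordering of the star path, split into path edges and pendant edges. -/
theorem extVal_starPathGraph (f : ℕ → ℝ)
    (d : StarPathV k ℓ ≃ Fin (Fintype.card (StarPathV k ℓ))) :
    extVal (starPathGraph k ℓ) (unitW (starPathGraph k ℓ)) f d =
      (∑ i : Fin ℓ, ∑ j : Fin ℓ, if (j : ℕ) = (i : ℕ) + 1 then
        f (Nat.dist (d (Sum.inl i)) (d (Sum.inl j))) else 0) +
      ∑ p : Fin ℓ × Fin (2 * k), f (Nat.dist (d (Sum.inl p.1)) (d (Sum.inr p))) := by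
  classical
  have hterm : ∀ u v : StarPathV k ℓ,
      (if (starPathGraph k ℓ).Adj u v then
        f (Nat.dist (d u) (d v)) * unitW (starPathGraph k ℓ) u v else 0) =
      if (starPathGraph k ℓ).Adj u v then f (Nat.dist (d u) (d v)) else 0 := by
    intro u v
    split_ifs with h <;> simp [unitW, h]
  have hpath : ∀ i j : Fin ℓ,
      (if (j : ℕ) = (i : ℕ) + 1 ∨ (i : ℕ) = (j : ℕ) + 1 then
        f (Nat.dist (d (Sum.inl i)) (d (Sum.inl j))) else 0) =
      (if (j : ℕ) = (i : ℕ) + 1 then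
        f (Nat.dist (d (Sum.inl i)) (d (Sum.inl j))) else 0) +
      (if (i : ℕ) = (j : ℕ) + 1 then
        f (Nat.dist (d (Sum.inl j)) (d (Sum.inl i))) else 0) := by
    intro i j
    rw [Nat.dist_comm (d (Sum.inl j))]
    by_cases h₁ : (j : ℕ) = (i : ℕ) + 1
    · have h₂ : ¬ (i : ℕ) = (j : ℕ) + 1 := by omega
      rw [if_pos (Or.inl h₁), if_pos h₁, if_neg h₂, add_zero]
    · simp [h₁]
  have hleaf : (∑ i : Fin ℓ, ∑ p : Fin ℓ × Fin (2 * k),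
      if p.1 = i then f (Nat.dist (d (Sum.inl i)) (d (Sum.inr p))) else 0) =
      ∑ p : Fin ℓ × Fin (2 * k), f (Nat.dist (d (Sum.inl p.1)) (d (Sum.inr p))) := by
    rw [Finset.sum_comm]
    simp
  have hleaf' : (∑ p : Fin ℓ × Fin (2 * k), ∑ i : Fin ℓ,
      if p.1 = i then f (Nat.dist (d (Sum.inr p)) (d (Sum.inl i))) else 0) =
      ∑ p : Fin ℓ × Fin (2 * k), f (Nat.dist (d (Sum.inl p.1)) (d (Sum.inr p))) := by
    simp [Nat.dist_comm]
  simp only [extVal, hterm]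
  simp only [Fintype.sum_sum_type, starPathGraph_adj_inl_inl, starPathGraph_adj_inl_inr,
    starPathGraph_adj_inr_inl, not_starPathGraph_adj_inr_inr, if_false, hpath,
    Finset.sum_add_distrib, hleaf, hleaf', Finset.sum_const_zero]
  rw [Finset.sum_comm (f := fun i j : Fin ℓ => if (i : ℕ) = (j : ℕ) + 1 then
        f (Nat.dist (d (Sum.inl j)) (d (Sum.inl i))) else 0)]
  ring

theorem card_starPathV : Fintype.card (StarPathV k ℓ) = ℓ + ℓ * (2 * k) := by
  simp

/-- The ordering that lists the centers along the path and then the leaves, those of the last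
center first. -/
theorem exists_centers_first_ordering (k m : ℕ) :
    ∃ d : StarPathV k (m + 1) ≃ Fin (Fintype.card (StarPathV k (m + 1))),
      (∀ i, (d (Sum.inl i) : ℕ) = i) ∧
      ∀ p, (d (Sum.inr p) : ℕ) = (m - p.1) * (2 * k) + p.2 + (m + 1) := by
  refine (exists_ordering_of_injective (V := StarPathV k (m + 1))
    (Sum.elim (fun i => (i : ℕ)) fun p => (m - p.1) * (2 * k) + p.2 + (m + 1)) ?_ ?_).imp
    fun d hd => ⟨fun i => hd (Sum.inl i), fun p => hd (Sum.inr p)⟩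
  · rintro (i | ⟨i, s⟩) (j | ⟨j, t⟩) h
    · exact congrArg Sum.inl (Fin.ext h)
    · simp only [Sum.elim_inl, Sum.elim_inr] at h
      omega
    · simp only [Sum.elim_inl, Sum.elim_inr] at h
      omega
    · simp only [Sum.elim_inr, Nat.add_right_cancel_iff] at h
      obtain ⟨h₁, h₂⟩ := mul_add_inj_of_lt s.2 t.2 h
      have hij : i = j := Fin.ext (by omega)
      rw [hij, Fin.ext h₂]
  · rintro (i | ⟨i, s⟩)
    · rw [card_starPathV]
      exact i.2.trans_le (Nat.le_add_right _ _)
    · rw [card_starPathV]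
      have h := Nat.mul_le_mul_right (2 * k) (Nat.sub_le m i)
      have hs := s.2
      simp only [Sum.elim_inr, Nat.add_mul, Nat.one_mul]
      omega

/-- The ordering that lists the stars one after another, each center in the middle of its
leaves. -/
theorem exists_stars_ordering (k ℓ : ℕ) :
    ∃ d : StarPathV k ℓ ≃ Fin (Fintype.card (StarPathV k ℓ)),
      (∀ i, (d (Sum.inl i) : ℕ) = i * (2 * k + 1) + k) ∧
      ∀ p, (d (Sum.inr p) : ℕ) =
        p.1 * (2 * k + 1) + if (p.2 : ℕ) < k then (p.2 : ℕ) else p.2 + 1 := by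
  have hk (t : Fin (2 * k)) : (if (t : ℕ) < k then (t : ℕ) else t + 1) < 2 * k + 1 := by
    split_ifs <;> omega
  have hne (t : Fin (2 * k)) : (if (t : ℕ) < k then (t : ℕ) else t + 1) ≠ k := by
    split_ifs <;> omega
  refine (exists_ordering_of_injective (V := StarPathV k ℓ)
    (Sum.elim (fun i => i * (2 * k + 1) + k)
      fun p => p.1 * (2 * k + 1) + if (p.2 : ℕ) < k then (p.2 : ℕ) else p.2 + 1) ?_ ?_).imp
    fun d hd => ⟨fun i => hd (Sum.inl i), fun p => hd (Sum.inr p)⟩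
  · rintro (i | ⟨i, s⟩) (j | ⟨j, t⟩) h
    · exact congrArg Sum.inl (Fin.ext (mul_add_inj_of_lt (by omega) (by omega) h).1)
    · exact absurd (mul_add_inj_of_lt (by omega) (hk t) h).2.symm (hne t)
    · exact absurd (mul_add_inj_of_lt (hk s) (by omega) h).2 (hne s)
    · obtain ⟨h₁, h₂⟩ := mul_add_inj_of_lt (hk s) (hk t) h
      have hst : s = t := Fin.ext (by split_ifs at h₂ <;> omega)
      have hij : i = j := Fin.ext h₁
      rw [hij, hst]
  · have hblock (i : Fin ℓ) {r : ℕ} (hr : r < 2 * k + 1) :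
        i * (2 * k + 1) + r < Fintype.card (StarPathV k ℓ) := by
      rw [card_starPathV]
      have h := Nat.mul_le_mul_right (2 * k + 1) (Nat.succ_le_of_lt i.2)
      rw [Nat.succ_mul, Nat.mul_succ ℓ] at h
      omega
    rintro (i | ⟨i, s⟩)
    · exact hblock i (by omega)
    · exact hblock i (hk s)

theorem two_mul_mul_le_iSup_extVal (k ℓ : ℕ) :
    2 * (k : ℝ) * (ℓ : ℝ) ≤
      ⨆ d : StarPathV k ℓ ≃ Fin (Fintype.card (StarPathV k ℓ)),
        extVal (starPathGraph k ℓ) (unitW (starPathGraph k ℓ)) (stepF k) d := by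
  obtain ⟨d, hc, hl⟩ := exists_stars_ordering k ℓ
  refine le_trans ?_ (le_ciSup (Set.finite_range _).bddAbove d)
  rw [extVal_starPathGraph]
  have hpath : 0 ≤ ∑ i : Fin ℓ, ∑ j : Fin ℓ, if (j : ℕ) = (i : ℕ) + 1 then
      stepF k (Nat.dist (d (Sum.inl i)) (d (Sum.inl j))) else 0 := by
    refine Finset.sum_nonneg fun i _ => Finset.sum_nonneg fun j _ => ?_
    unfold stepF
    split_ifs <;> norm_num
  have hleaf (p : Fin ℓ × Fin (2 * k)) :
      stepF k (Nat.dist (d (Sum.inl p.1)) (d (Sum.inr p))) = 1 := by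
    rw [stepF, if_pos]
    rw [hc, hl, Nat.dist_add_add_left, Nat.dist]
    have := p.2.2
    split_ifs <;> omega
  simp only [hleaf, Finset.sum_const, Finset.card_univ, Fintype.card_prod, Fintype.card_fin,
    nsmul_eq_mul, mul_one]
  push_cast
  linarith

theorem extVal_centers_first {m : ℕ}
    (d : StarPathV k (m + 1) ≃ Fin (Fintype.card (StarPathV k (m + 1)))) (hk : 1 ≤ k)
    (hc : ∀ i, (d (Sum.inl i) : ℕ) = i)
    (hl : ∀ p, (d (Sum.inr p) : ℕ) = (m - p.1) * (2 * k) + p.2 + (m + 1)) :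
    extVal (starPathGraph k (m + 1)) (unitW (starPathGraph k (m + 1))) (stepF k) d = m + k := by
  rw [extVal_starPathGraph]
  congr 1
  · have hrow (i : Fin (m + 1)) : (∑ j : Fin (m + 1), if (j : ℕ) = (i : ℕ) + 1 then
        stepF k (Nat.dist (d (Sum.inl i)) (d (Sum.inl j))) else 0) =
        if (i : ℕ) < m then 1 else 0 := by
      split_ifs with hi
      · rw [Finset.sum_eq_single (⟨i + 1, by omega⟩ : Fin (m + 1))]
        · rw [if_pos rfl, hc, hc, stepF, if_pos]
          simp only [Nat.dist]
          omega
        · intro j _ hj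
          exact if_neg fun h => hj (Fin.ext h)
        · simp
      · exact Finset.sum_eq_zero fun j _ => if_neg (by omega)
    simp only [hrow]
    rw [Fin.sum_univ_castSucc]
    simp
  · have hterm (i : Fin (m + 1)) (t : Fin (2 * k)) :
        stepF k (Nat.dist (d (Sum.inl i)) (d (Sum.inr (i, t)))) =
          if i = Fin.last m then (if (t : ℕ) < k then 1 else 0) else 0 := by
      rw [hc, hl, stepF, ← ite_and]
      refine if_congr ?_ rfl rfl
      rw [Nat.dist_eq_sub_of_le (by simp only; omega), Fin.ext_iff, Fin.val_last]
      simp only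
      constructor
      · intro h
        have him : (i : ℕ) = m := by
          by_contra hne
          have := Nat.mul_le_mul_right (2 * k) (show 1 ≤ m - i by omega)
          omega
        rw [him] at h
        simp at h
        omega
      · rintro ⟨him, ht⟩
        rw [him]
        simp
        omega
    rw [Fintype.sum_prod_type]
    simp only [hterm]
    rw [Finset.sum_eq_single (Fin.last m) (fun i _ hi => by simp [hi]) (by simp)]
    simp only [if_true]
    rw [Fin.sum_univ_eq_sum_range (fun t => if t < k then (1 : ℝ) else 0), two_mul,
      Finset.sum_range_add]
    rw [Finset.sum_congr rfl fun t ht => if_pos (Finset.mem_range.1 ht)]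
    simp

theorem unitW_le_one {V : Type} (G : SimpleGraph V) (u v : V) : unitW G u v ≤ 1 := by
  unfold unitW
  split_ifs <;> norm_num

theorem unitW_nonneg {V : Type} (G : SimpleGraph V) (u v : V) : 0 ≤ unitW G u v := by
  unfold unitW
  split_ifs <;> norm_num

theorem greedy_centers_first {m : ℕ}
    (d : StarPathV k (m + 1) ≃ Fin (Fintype.card (StarPathV k (m + 1)))) (hk : 1 ≤ k)
    (hc : ∀ i, (d (Sum.inl i) : ℕ) = i)
    (hl : ∀ p, (d (Sum.inr p) : ℕ) = (m - p.1) * (2 * k) + p.2 + (m + 1))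
    (i j : Fin (Fintype.card (StarPathV k (m + 1))))
    (hi : (i : ℕ) + 1 < Fintype.card (StarPathV k (m + 1))) (hij : (i : ℕ) < (j : ℕ)) :
    unitW (starPathGraph k (m + 1)) (d.symm i) (d.symm j) ≤
      unitW (starPathGraph k (m + 1)) (d.symm i) (d.symm ⟨(i : ℕ) + 1, hi⟩) := by
  obtain ⟨u, rfl⟩ := d.surjective i
  obtain ⟨v, rfl⟩ := d.surjective j
  simp only [Equiv.symm_apply_apply]
  rcases u with a | p
  · have hadj : (starPathGraph k (m + 1)).Adj (Sum.inl a)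
        (d.symm ⟨(d (Sum.inl a) : ℕ) + 1, hi⟩) := by
      by_cases ha : (a : ℕ) < m
      · have hnext : d.symm ⟨(d (Sum.inl a) : ℕ) + 1, hi⟩ = Sum.inl ⟨a + 1, by omega⟩ := by
          rw [Equiv.symm_apply_eq]
          exact Fin.ext (by simp [hc])
        rw [hnext, starPathGraph_adj_inl_inl]
        exact Or.inl rfl
      · have ham : (a : ℕ) = m := by omega
        have hnext : d.symm ⟨(d (Sum.inl a) : ℕ) + 1, hi⟩ = Sum.inr (a, ⟨0, by omega⟩) := by
          rw [Equiv.symm_apply_eq]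
          exact Fin.ext (by simp [hc, hl, ham])
        rw [hnext, starPathGraph_adj_inl_inr]
    refine (unitW_le_one _ _ _).trans ?_
    rw [unitW, if_pos hadj]
  · rcases v with b | q
    · rw [hc, hl] at hij
      omega
    · rw [unitW, if_neg (not_starPathGraph_adj_inr_inr p q)]
      exact unitW_nonneg _ _ _

end StarPath

/-- The factor `2k` for greedy is tight: for every `k ≥ 1` and `ε > 0` there
is an instance (the path of `ℓ` stars with `2k` leaves each, unit weights, step discount) and
a greedy enumeration of its vertices whose ordering `d` has `val(d) = ℓ - 1 + k`, while
`OPT ≥ 2kℓ`; in particular `OPT > (2k - ε)·val(d)`. -/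
theorem extTSP_greedy_tight (k : ℕ) (hk : 1 ≤ k) (ε : ℝ) (hε : 0 < ε) :
    ∃ ℓ : ℕ, 1 ≤ ℓ ∧
      ∃ d : StarPathV k ℓ ≃ Fin (Fintype.card (StarPathV k ℓ)),
        (∀ (i j : Fin (Fintype.card (StarPathV k ℓ)))
            (hi : (i : ℕ) + 1 < Fintype.card (StarPathV k ℓ)),
          (i : ℕ) < (j : ℕ) →
          unitW (starPathGraph k ℓ) (d.symm i) (d.symm j)
            ≤ unitW (starPathGraph k ℓ) (d.symm i) (d.symm ⟨(i : ℕ) + 1, hi⟩)) ∧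
        extVal (starPathGraph k ℓ) (unitW (starPathGraph k ℓ)) (stepF k) d
          = (ℓ : ℝ) - 1 + (k : ℝ) ∧
        (⨆ d' : StarPathV k ℓ ≃ Fin (Fintype.card (StarPathV k ℓ)),
            extVal (starPathGraph k ℓ) (unitW (starPathGraph k ℓ)) (stepF k) d')
          ≥ 2 * (k : ℝ) * (ℓ : ℝ) ∧
        (⨆ d' : StarPathV k ℓ ≃ Fin (Fintype.card (StarPathV k ℓ)),
            extVal (starPathGraph k ℓ) (unitW (starPathGraph k ℓ)) (stepF k) d')
          > (2 * (k : ℝ) - ε) *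
              extVal (starPathGraph k ℓ) (unitW (starPathGraph k ℓ)) (stepF k) d := by
  obtain ⟨m, hm⟩ := exists_nat_gt (2 * (k : ℝ) ^ 2 / ε)
  rw [div_lt_iff₀ hε] at hm
  obtain ⟨d, hc, hl⟩ := exists_centers_first_ordering k m
  have hval := extVal_centers_first d hk hc hl
  have hopt := two_mul_mul_le_iSup_extVal k (m + 1)
  refine ⟨m + 1, by omega, d, greedy_centers_first d hk hc hl, ?_, hopt, ?_⟩
  · rw [hval]
    push_cast
    ring
  · refine lt_of_lt_of_le ?_ hopt
    rw [hval]
    push_cast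
    have hεk : 0 ≤ ε * (k : ℝ) := by positivity
    have hk0 : 0 ≤ (k : ℝ) := by positivity
    nlinarith
end

section
/- Let M = max { Σ_{e∈B} w(e) : B ⊆ E such that every vertex of V is incident to at most 2 edges of B } be the maximum weight of a simple 2-matching. Then OPT ≤ k · M; equivalently, M ≥ OPT/k. -/
/-- The distance in an ordering between the two endpoints of an unordered pair. -/
def orderDist {V : Type} {n : ℕ} (d : V ≃ Fin n) : Sym2 V → ℕ :=
  Sym2.lift ⟨fun u v => Nat.dist (d u) (d v), fun _ _ => Nat.dist_comm _ _⟩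

/-- Summing a symmetric function over ordered adjacent pairs counts every edge twice. -/
theorem SimpleGraph.sum_sum_adj_eq_two_mul_sum_edgeFinset {V : Type} [Fintype V] [DecidableEq V]
    (G : SimpleGraph V) [DecidableRel G.Adj] (g : Sym2 V → ℝ) :
    ∑ u, ∑ v, (if G.Adj u v then g s(u, v) else 0) = 2 * ∑ e ∈ G.edgeFinset, g e := by
  rw [← Fintype.sum_prod_type' (fun u v => if G.Adj u v then g s(u, v) else 0),
    ← Finset.sum_filter,
    ← Finset.sum_fiberwise_of_maps_to (t := G.edgeFinset) (g := fun p : V × V => s(p.1, p.2))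
      (by simp), Finset.mul_sum]
  refine Finset.sum_congr rfl fun e he => ?_
  induction e with
  | _ a b =>
    have hab : G.Adj a b := by simpa using he
    have hfiber : ((Finset.univ.filter fun p : V × V => G.Adj p.1 p.2).filter
        fun p => s(p.1, p.2) = s(a, b)) = {(a, b), (b, a)} := by
      ext ⟨x, y⟩
      simp only [Finset.mem_filter, Finset.mem_univ, true_and, Sym2.eq_iff, Finset.mem_insert,
        Finset.mem_singleton, Prod.mk.injEq]
      constructor
      · exact fun h => h.2
      · rintro (⟨rfl, rfl⟩ | ⟨rfl, rfl⟩)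
        · exact ⟨hab, Or.inl ⟨rfl, rfl⟩⟩
        · exact ⟨hab.symm, Or.inr ⟨rfl, rfl⟩⟩
    rw [hfiber, Finset.sum_pair (by simp [hab.ne]), Sym2.eq_swap (a := b), two_mul]

theorem extVal_eq_sum_edgeFinset {V : Type} [Fintype V] [DecidableEq V]
    (G : SimpleGraph V) [DecidableRel G.Adj] (w : V → V → ℝ) (hw_symm : ∀ u v, w u v = w v u)
    (f : ℕ → ℝ) (d : V ≃ Fin (Fintype.card V)) :
    extVal G w f d =
      ∑ e ∈ G.edgeFinset, f (orderDist d e) * Sym2.lift ⟨w, hw_symm⟩ e := by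
  have h := G.sum_sum_adj_eq_two_mul_sum_edgeFinset
    fun e => f (orderDist d e) * Sym2.lift ⟨w, hw_symm⟩ e
  have hval : extVal G w f d = (1 / 2) * ∑ u, ∑ v, (if G.Adj u v then
      f (orderDist d s(u, v)) * Sym2.lift ⟨w, hw_symm⟩ s(u, v) else 0) := by
    unfold extVal
    congr! 5
  rw [hval, h]
  ring

/-- At most two pairs at a given distance in an ordering share a given vertex. -/
theorem card_filter_orderDist_eq_le_two {V : Type} [Fintype V] [DecidableEq V] {n : ℕ}
    (d : V ≃ Fin n) (i : ℕ) (S : Finset (Sym2 V)) (v : V) :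
    ((S.filter fun e => orderDist d e = i).filter fun e => v ∈ e).card ≤ 2 := by
  have hsub : ((S.filter fun e => orderDist d e = i).filter fun e => v ∈ e) ⊆
      (Finset.univ.filter fun u => Nat.dist (d v) (d u) = i).image fun u => s(v, u) := by
    intro e he
    obtain ⟨he, u, rfl⟩ := Finset.mem_filter.1 he
    exact Finset.mem_image_of_mem _
      (Finset.mem_filter.2 ⟨Finset.mem_univ _, (Finset.mem_filter.1 he).2⟩)
  refine (Finset.card_le_card hsub).trans (Finset.card_image_le.trans ?_)
  refine (Finset.card_le_card_of_injOn (t := {(d v : ℕ) + i, (d v : ℕ) - i})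
    (fun u => (d u : ℕ)) ?_ ?_).trans Finset.card_le_two
  · intro u hu
    have hu' : Nat.dist (d v) (d u) = i := by simpa using hu
    simp only [Finset.coe_insert, Finset.coe_singleton, Set.mem_insert_iff,
      Set.mem_singleton_iff]
    unfold Nat.dist at hu'
    omega
  · exact fun a _ b _ hab => d.injective (Fin.ext hab)

/-- Let `M` be the maximum weight of a simple 2-matching (a set of edges in
which every vertex is incident to at most two of them).  Then `OPT ≤ k·M`. -/
theorem extTSP_le_k_mul_two_matching {V : Type} [Fintype V] [DecidableEq V]
    (G : SimpleGraph V) [DecidableRel G.Adj]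
    (w : V → V → ℝ) (hw_symm : ∀ u v, w u v = w v u)
    (hw_pos : ∀ u v, G.Adj u v → 0 < w u v)
    (k : ℕ) (hk : 1 ≤ k)
    (f : ℕ → ℝ) (hf_nonneg : ∀ i, 0 ≤ f i) (hf_mono : Antitone f)
    (hf_one : f 1 = 1) (hf_zero : ∀ i, k < i → f i = 0) :
    (⨆ d : V ≃ Fin (Fintype.card V), extVal G w f d)
      ≤ (k : ℝ) *
        ⨆ B : {B : Finset (Sym2 V) // B ⊆ G.edgeFinset ∧
            ∀ v : V, (B.filter (fun e => v ∈ e)).card ≤ 2},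
          ∑ e ∈ B.1, Sym2.lift ⟨w, hw_symm⟩ e := by
  have : Nonempty (V ≃ Fin (Fintype.card V)) := ⟨Fintype.equivFin V⟩
  refine ciSup_le fun d => ?_
  rw [extVal_eq_sum_edgeFinset G w hw_symm f d]
  set W : Sym2 V → ℝ := Sym2.lift ⟨w, hw_symm⟩
  have hdist_pos : ∀ e ∈ G.edgeFinset, 1 ≤ orderDist d e := by
    intro e he
    induction e with
    | _ a b =>
      have hab : G.Adj a b := by simpa using he
      refine Nat.dist_pos_of_ne fun h => hab.ne (d.injective (Fin.ext h))
  have hW_nonneg : ∀ e ∈ G.edgeFinset, 0 ≤ W e := by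
    intro e he
    induction e with
    | _ a b => exact (hw_pos a b (by simpa using he)).le
  calc ∑ e ∈ G.edgeFinset, f (orderDist d e) * W e
      ≤ ∑ e ∈ G.edgeFinset, if orderDist d e ∈ Finset.Icc 1 k then W e else 0 := by
        refine Finset.sum_le_sum fun e he => ?_
        split_ifs with h
        · exact mul_le_of_le_one_left (hW_nonneg e he)
            ((hf_mono (hdist_pos e he)).trans_eq hf_one)
        · have hlt : k < orderDist d e := by
            by_contra hle
            exact h (Finset.mem_Icc.2 ⟨hdist_pos e he, not_lt.1 hle⟩)
          rw [hf_zero _ hlt, zero_mul]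
    _ = ∑ i ∈ Finset.Icc 1 k, ∑ e ∈ G.edgeFinset.filter (fun e => orderDist d e = i), W e := by
        simp_rw [Finset.sum_filter]
        rw [Finset.sum_comm]
        exact Finset.sum_congr rfl fun e _ => (Finset.sum_ite_eq _ _ fun _ => W e).symm
    _ ≤ ∑ _i ∈ Finset.Icc 1 k, ⨆ B : {B : Finset (Sym2 V) // B ⊆ G.edgeFinset ∧
            ∀ v : V, (B.filter (fun e => v ∈ e)).card ≤ 2}, ∑ e ∈ B.1, W e := by
        refine Finset.sum_le_sum fun i _ => ?_
        exact le_ciSup (f := fun B : {B : Finset (Sym2 V) // B ⊆ G.edgeFinset ∧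
            ∀ v : V, (B.filter (fun e => v ∈ e)).card ≤ 2} => ∑ e ∈ B.1, W e)
          (Set.finite_range _).bddAbove
          ⟨_, Finset.filter_subset _ _, card_filter_orderDist_eq_le_two d i G.edgeFinset⟩
    _ = _ := by simp
end

section
/- Let G be a simple cycle on ℓ ≥ 3 vertices with positive edge weights, and let w(C) denote its total edge weight. Then there exists an ordering d of its vertices with val(d) ≥ w(C)·(1 − (1 − f(ℓ−1))/ℓ). (Such an ordering is obtained by deleting a minimum-weight edge e of the cycle and listing the vertices along the remaining Hamiltonian path, so that all edges except e are realized at distance 1 and e is realized at distance ℓ−1.) -/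
/-- On a cycle, half the sum of a symmetric function over ordered adjacent pairs is its sum over
consecutive pairs. -/
lemma half_sum_adj_eq_sum_cycle {V : Type} [Fintype V] (G : SimpleGraph V) [DecidableRel G.Adj]
    (ℓ : ℕ) [NeZero ℓ] (hℓ : 3 ≤ ℓ) (e : ZMod ℓ ≃ V)
    (he : ∀ i j : ZMod ℓ, G.Adj (e i) (e j) ↔ j = i + 1 ∨ i = j + 1)
    (g : V → V → ℝ) (hg : ∀ u v, g u v = g v u) :
    (1 / 2) * ∑ u : V, ∑ v : V, (if G.Adj u v then g u v else 0) =
      ∑ i : ZMod ℓ, g (e i) (e (i + 1)) := by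
  have h_two : (2 : ZMod ℓ) ≠ 0 := by
    intro h
    have h' : ((2 : ℕ) : ZMod ℓ) = 0 := by exact_mod_cast h
    rw [ZMod.natCast_eq_zero_iff] at h'
    have := Nat.le_of_dvd (by norm_num) h'
    omega
  have split (i j : ZMod ℓ) : (if G.Adj (e i) (e j) then g (e i) (e j) else 0) =
      (if j = i + 1 then g (e i) (e j) else 0) + (if i = j + 1 then g (e i) (e j) else 0) := by
    by_cases h₁ : j = i + 1
    · have h₂ : i ≠ j + 1 := by
        intro h₂
        apply h_two
        linear_combination -h₁ - h₂
      rw [if_pos ((he i j).2 (Or.inl h₁)), if_pos h₁, if_neg h₂, add_zero]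
    · simp [he, h₁]
  have reindex : ∑ u : V, ∑ v : V, (if G.Adj u v then g u v else 0) =
      ∑ i : ZMod ℓ, ∑ j : ZMod ℓ, (if G.Adj (e i) (e j) then g (e i) (e j) else 0) := by
    rw [← e.sum_comp]
    exact Finset.sum_congr rfl fun i _ => (e.sum_comp _).symm
  have forward : ∑ i : ZMod ℓ, ∑ j : ZMod ℓ, (if j = i + 1 then g (e i) (e j) else 0) =
      ∑ i : ZMod ℓ, g (e i) (e (i + 1)) := by
    simp
  have backward : ∑ i : ZMod ℓ, ∑ j : ZMod ℓ, (if i = j + 1 then g (e i) (e j) else 0) =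
      ∑ i : ZMod ℓ, g (e i) (e (i + 1)) := by
    rw [Finset.sum_comm]
    simp [hg]
  rw [reindex]
  simp only [split, Finset.sum_add_distrib, forward, backward]
  ring

lemma extVal_eq_sum_cycle {V : Type} [Fintype V] (G : SimpleGraph V)
    (ℓ : ℕ) [NeZero ℓ] (hℓ : 3 ≤ ℓ) (e : ZMod ℓ ≃ V)
    (he : ∀ i j : ZMod ℓ, G.Adj (e i) (e j) ↔ j = i + 1 ∨ i = j + 1)
    (w : V → V → ℝ) (hw : ∀ u v, w u v = w v u) (f : ℕ → ℝ)
    (d : V ≃ Fin (Fintype.card V)) :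
    extVal G w f d =
      ∑ i : ZMod ℓ, f (Nat.dist (d (e i)) (d (e (i + 1)))) * w (e i) (e (i + 1)) := by
  classical
  rw [← half_sum_adj_eq_sum_cycle G ℓ hℓ e he (fun u v => f (Nat.dist (d u) (d v)) * w u v)
    (fun u v => by rw [Nat.dist_comm, hw]), extVal]

lemma ZMod.dist_val_val_add_one (ℓ : ℕ) (hℓ : 2 ≤ ℓ) (j : ZMod ℓ) :
    Nat.dist j.val (j + 1).val = if j = -1 then ℓ - 1 else 1 := by
  have : Fact (1 < ℓ) := ⟨hℓ⟩
  have : NeZero ℓ := ⟨by omega⟩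
  have hj := j.val_lt
  have val_one := ZMod.val_one ℓ
  split_ifs with h
  · have h_zero : j + 1 = 0 := by rw [h, neg_add_cancel]
    have h_dvd : ℓ ∣ j.val + 1 := by
      rw [← ZMod.natCast_eq_zero_iff]
      simpa using h_zero
    have := Nat.le_of_dvd (by omega) h_dvd
    rw [h_zero, ZMod.val_zero, Nat.dist]
    omega
  · have h_ne : j.val + 1 ≠ ℓ := by
      intro h_eq
      apply h
      have : ((j.val + 1 : ℕ) : ZMod ℓ) = 0 := by rw [h_eq, ZMod.natCast_self]
      rw [Nat.cast_add, ZMod.natCast_zmod_val, Nat.cast_one] at this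
      exact eq_neg_of_add_eq_zero_left this
    rw [ZMod.val_add_of_lt (by omega), val_one, Nat.dist]
    omega

lemma ZMod.exists_equiv_fin_val (ℓ m : ℕ) [NeZero ℓ] (h : ℓ = m) :
    ∃ φ : ZMod ℓ ≃ Fin m, ∀ j, (φ j : ℕ) = j.val := by
  subst h
  exact ⟨⟨fun j => ⟨j.val, j.val_lt⟩, fun x => (x : ℕ), fun j => by simp,
    fun x => Fin.ext (ZMod.val_cast_of_lt x.isLt)⟩, fun _ => rfl⟩

/-- If `G` is a simple cycle on `ℓ ≥ 3` vertices with positive edge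
weights, then some ordering `d` of its vertices has
`val(d) ≥ w(C)·(1 - (1 - f(ℓ-1))/ℓ)`, where `w(C)` is the total edge weight.
(Delete a minimum-weight edge and list the vertices along the remaining Hamiltonian path.) -/
theorem extTSP_cycle_lower_bound {V : Type} [Fintype V] [DecidableEq V]
    (G : SimpleGraph V) [DecidableRel G.Adj]
    (ℓ : ℕ) (hℓ : 3 ≤ ℓ) (e : ZMod ℓ ≃ V)
    (he : ∀ i j : ZMod ℓ, G.Adj (e i) (e j) ↔ j = i + 1 ∨ i = j + 1)
    (w : V → V → ℝ) (hw_symm : ∀ u v, w u v = w v u)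
    (hw_pos : ∀ u v, G.Adj u v → 0 < w u v)
    (k : ℕ) (hk : 1 ≤ k)
    (f : ℕ → ℝ) (hf_nonneg : ∀ i, 0 ≤ f i) (hf_mono : Antitone f)
    (hf_one : f 1 = 1) (hf_zero : ∀ i, k < i → f i = 0) :
    ∃ d : V ≃ Fin (Fintype.card V),
      extVal G w f d ≥
        ((1 / 2) * ∑ u : V, ∑ v : V, if G.Adj u v then w u v else 0) *
          (1 - (1 - f (ℓ - 1)) / (ℓ : ℝ)) := by
  have : NeZero ℓ := ⟨by omega⟩
  have h_card : ℓ = Fintype.card V := by rw [← Fintype.card_congr e, ZMod.card]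
  obtain ⟨φ, hφ⟩ := ZMod.exists_equiv_fin_val ℓ _ h_card
  obtain ⟨m, hm⟩ := Finite.exists_min fun i : ZMod ℓ => w (e i) (e (i + 1))
  refine ⟨(e.symm.trans (Equiv.subRight (m + 1))).trans φ, ?_⟩
  have dist_eq (i : ZMod ℓ) : Nat.dist (i - (m + 1)).val (i + 1 - (m + 1)).val =
      if i = m then ℓ - 1 else 1 := by
    have h_iff : i - (m + 1) = -1 ↔ i = m :=
      ⟨fun h => by linear_combination h, fun h => by linear_combination h⟩
    rw [show i + 1 - (m + 1) = i - (m + 1) + 1 by ring,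
      ZMod.dist_val_val_add_one ℓ (by omega)]
    simp only [h_iff]
  have value_term (i : ZMod ℓ) : f (if i = m then ℓ - 1 else 1) * w (e i) (e (i + 1)) =
      w (e i) (e (i + 1)) - if i = m then (1 - f (ℓ - 1)) * w (e i) (e (i + 1)) else 0 := by
    split_ifs
    · ring
    · rw [hf_one]
      ring
  have h_min : (ℓ : ℝ) * w (e m) (e (m + 1)) ≤ ∑ i : ZMod ℓ, w (e i) (e (i + 1)) := by
    simpa [ZMod.card] using Finset.card_nsmul_le_sum Finset.univ _ _ fun i _ => hm i
  have h_f : f (ℓ - 1) ≤ 1 := hf_one ▸ hf_mono (by omega)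
  have h_pos : (0 : ℝ) < ℓ := by exact_mod_cast (by omega : 0 < ℓ)
  rw [half_sum_adj_eq_sum_cycle G ℓ hℓ e he w hw_symm,
    extVal_eq_sum_cycle G ℓ hℓ e he w hw_symm]
  simp only [Equiv.trans_apply, Equiv.symm_apply_apply, Equiv.subRight_apply, hφ, dist_eq,
    value_term, Finset.sum_sub_distrib, Finset.sum_ite_eq', Finset.mem_univ, if_true]
  set S := ∑ i : ZMod ℓ, w (e i) (e (i + 1))
  have h_avg : w (e m) (e (m + 1)) ≤ S / ℓ := by
    rw [le_div_iff₀ h_pos]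
    linarith
  have h_loss := mul_le_mul_of_nonneg_left h_avg (sub_nonneg.2 h_f)
  calc S * (1 - (1 - f (ℓ - 1)) / ℓ) = S - (1 - f (ℓ - 1)) * (S / ℓ) := by ring
    _ ≤ S - (1 - f (ℓ - 1)) * w (e m) (e (m + 1)) := by linarith
end

section
/- Let d be an ordering of V, let S ⊆ V, and let d' be the ordering of V∖S induced by d (keeping the vertices of V∖S in the same relative order). Then the value of d' on the induced subgraph G[V∖S] satisfies val_{G[V∖S]}(d') ≥ val_G(d) − Σ f(|d(u)−d(v)|)·w(u,v), where the subtracted sum ranges over edges {u,v} ∈ E with at least one endpoint in S. (Removing vertices can only decrease the distance between the endpoints of the remaining edges, and f is non-increasing.) -/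
open Classical in
/-- The Ext-TSP value of an ordering of `S` on the induced subgraph `G[S]`. -/
noncomputable def extValOn {V : Type} [Fintype V] [DecidableEq V] (G : SimpleGraph V)
    (w : V → V → ℝ) (f : ℕ → ℝ) (S : Finset V)
    (d : {x // x ∈ S} ≃ Fin S.card) : ℝ :=
  (1 / 2) * ∑ u : {x // x ∈ S}, ∑ v : {x // x ∈ S},
    if G.Adj u.1 v.1 then f (Nat.dist (d u) (d v)) * w u.1 v.1 else 0

/-- A strictly monotone map between finite linear orders does not decrease distances. -/
theorem StrictMono.natDist_fin_le {m n : ℕ} {g : Fin m → Fin n} (hg : StrictMono g)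
    (a b : Fin m) : Nat.dist a b ≤ Nat.dist (g a) (g b) := by
  wlog hab : a ≤ b generalizing a b
  · rw [Nat.dist_comm, Nat.dist_comm (g a)]
    exact this b a (le_of_not_ge hab)
  rw [Nat.dist_eq_sub_of_le hab, Nat.dist_eq_sub_of_le (hg.monotone hab),
    ← Fin.card_Ico, ← Fin.card_Ico]
  refine Finset.card_le_card_of_injOn g (fun x hx => ?_) hg.injective.injOn
  simp only [Finset.coe_Ico, Set.mem_Ico] at hx ⊢
  exact ⟨hg.monotone hx.1, hg hx.2⟩

/-- A double sum splits into the pairs avoiding `S` and the pairs meeting `S`. -/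
theorem Finset.sum_sum_eq_sum_compl_add {V M : Type*} [Fintype V] [DecidableEq V]
    [AddCommMonoid M] (S : Finset V) (F : V → V → M) :
    ∑ u, ∑ v, F u v =
      (∑ u : {x // x ∈ Sᶜ}, ∑ v : {x // x ∈ Sᶜ}, F u v) +
        ∑ u, ∑ v, if u ∈ S ∨ v ∈ S then F u v else 0 := by
  have h : (∑ u : {x // x ∈ Sᶜ}, ∑ v : {x // x ∈ Sᶜ}, F u v) =
      ∑ u, ∑ v, if u ∈ S ∨ v ∈ S then 0 else F u v := by
    simp_rw [Finset.sum_coe_sort Sᶜ (F _)]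
    rw [Finset.sum_coe_sort Sᶜ (fun u => ∑ v ∈ Sᶜ, F u v),
      ← Finset.sum_subset (Finset.subset_univ Sᶜ)]
    · refine Finset.sum_congr rfl fun u hu => ?_
      rw [← Finset.sum_subset (Finset.subset_univ Sᶜ)]
      · refine Finset.sum_congr rfl fun v hv => ?_
        simp_all
      · simp_all
    · simp_all
  rw [h, ← Finset.sum_add_distrib]
  refine Finset.sum_congr rfl fun u _ => ?_
  rw [← Finset.sum_add_distrib]
  refine Finset.sum_congr rfl fun v _ => ?_
  split_ifs <;> simp

/-- Deleting a set `S` of vertices: if `d'` is the ordering of `V ∖ S`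
induced by `d` (same relative order), then the value of `d'` on the induced subgraph
`G[V ∖ S]` is at least `val_G(d)` minus the discounted weight of all edges with at least one
endpoint in `S`.  (Removing vertices only decreases distances, and `f` is non-increasing.) -/
theorem extTSP_delete_vertices {V : Type} [Fintype V] [DecidableEq V]
    (G : SimpleGraph V) [DecidableRel G.Adj]
    (w : V → V → ℝ) (hw_symm : ∀ u v, w u v = w v u)
    (hw_pos : ∀ u v, G.Adj u v → 0 < w u v)
    (k : ℕ) (hk : 1 ≤ k)
    (f : ℕ → ℝ) (hf_nonneg : ∀ i, 0 ≤ f i) (hf_mono : Antitone f)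
    (hf_one : f 1 = 1) (hf_zero : ∀ i, k < i → f i = 0)
    (S : Finset V) (d : V ≃ Fin (Fintype.card V))
    (d' : {x // x ∈ Sᶜ} ≃ Fin Sᶜ.card)
    (hd' : ∀ x y : {x // x ∈ Sᶜ}, d' x ≤ d' y ↔ d x.1 ≤ d y.1) :
    extValOn G w f Sᶜ d' ≥
      extVal G w f d -
        (1 / 2) * ∑ u : V, ∑ v : V,
          (if G.Adj u v ∧ (u ∈ S ∨ v ∈ S)
           then f (Nat.dist (d u) (d v)) * w u v else 0) := by
  classical
  have hdist (u v : {x // x ∈ Sᶜ}) : Nat.dist (d' u) (d' v) ≤ Nat.dist (d u) (d v) := by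
    have hg : StrictMono fun i => d (d'.symm i) := fun i j hij => by
      rw [← not_le, ← hd']
      simpa using hij
    simpa using hg.natDist_fin_le (d' u) (d' v)
  have hle : (∑ u : {x // x ∈ Sᶜ}, ∑ v : {x // x ∈ Sᶜ},
        if G.Adj u v then f (Nat.dist (d u) (d v)) * w u v else 0) ≤
      ∑ u : {x // x ∈ Sᶜ}, ∑ v : {x // x ∈ Sᶜ},
        if G.Adj u v then f (Nat.dist (d' u) (d' v)) * w u v else 0 := by
    refine Finset.sum_le_sum fun u _ => Finset.sum_le_sum fun v _ => ?_
    split_ifs with h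
    · exact mul_le_mul_of_nonneg_right (hf_mono (hdist u v)) (hw_pos u v h).le
    · rfl
  have hsplit := Finset.sum_sum_eq_sum_compl_add S fun u v =>
    if G.Adj u v then f (Nat.dist (d u) (d v)) * w u v else 0
  simp only [← ite_and, and_comm (b := G.Adj _ _)] at hsplit
  have hval : extVal G w f d = (1 / 2) * ∑ u, ∑ v,
      if G.Adj u v then f (Nat.dist (d u) (d v)) * w u v else 0 := by
    unfold extVal
    congr!
  have hvalOn : extValOn G w f Sᶜ d' = (1 / 2) * ∑ u : {x // x ∈ Sᶜ}, ∑ v : {x // x ∈ Sᶜ},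
      if G.Adj u v then f (Nat.dist (d' u) (d' v)) * w u v else 0 := by
    unfold extValOn
    congr!
  rw [hval, hvalOn, hsplit]
  linarith
end
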